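/- arXiv:2303.05395 — 2 statements merged into one kernel-verified Lean document; each statement's English description precedes it below -/
import Mathlib

section
/- (Sylvester's theorem) For all integers m ≥ n ≥ 1, the product P(m,n) = ∏_{i=1}^{n}(m+i) of n consecutive integers each strictly greater than n is divisible by at least one prime strictly greater than n. -/
/-- `P m n = ∏_{i=1}^n (m+i)`. -/
def P (m n : ℕ) : ℕ := ∏ i ∈ Finset.Icc 1 n, (m + i)

/-- The product is `n!` times a binomial coefficient. -/
theorem syl_P_eq (m n : ℕ) : P m n = n.factorial * (m + n).choose n := by
  have h : P m n = (m + 1).ascFactorial n := by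
    rw [Nat.ascFactorial_eq_prod_range, P, ← Finset.Ico_succ_right_eq_Icc,
      Finset.prod_Ico_eq_prod_range]
    apply Finset.prod_congr (by simp)
    intro i _
    ring
  rw [h, Nat.ascFactorial_eq_factorial_mul_choose]

/-- A multiple of `p` in the window `(m, m+n]` gives divisibility of the product. -/
theorem syl_dvd_of_div_lt {m n p : ℕ} (hp : 0 < p) (h : m / p < (m + n) / p) : p ∣ P m n := by
  have h1 : m < p * ((m + n) / p) := by
    have := Nat.lt_mul_div_succ m hp
    exact this.trans_le (Nat.mul_le_mul_left p h)
  have h2 : p * ((m + n) / p) ≤ m + n := Nat.mul_div_le _ _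
  have h3 : p * ((m + n) / p) - m ∈ Finset.Icc 1 n := by
    rw [Finset.mem_Icc]; omega
  have h4 : m + (p * ((m + n) / p) - m) ∣ P m n := by
    unfold P
    exact Finset.dvd_prod_of_mem (fun i => m + i) h3
  refine dvd_trans ?_ h4
  rw [Nat.add_sub_cancel' h1.le]
  exact Dvd.intro _ rfl

/-- `(N/k)^k ≤ C(N,k)`. -/
theorem syl_pow_le (N k : ℕ) (hk : k ≤ N) : N ^ k ≤ k ^ k * N.choose k := by
  have h1 : ∏ i ∈ Finset.range k, (N * (k - i)) ≤ ∏ i ∈ Finset.range k, (k * (N - i)) := by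
    apply Finset.prod_le_prod' 
    intro i hi
    have hi' := Finset.mem_range.1 hi
    rw [Nat.mul_sub, Nat.mul_sub, Nat.mul_comm N k]
    exact Nat.sub_le_sub_left (Nat.mul_le_mul_right i hk) _
  rw [Finset.prod_mul_distrib, Finset.prod_mul_distrib, ← Nat.descFactorial_eq_prod_range,
    ← Nat.descFactorial_eq_prod_range, Nat.descFactorial_self,
    Nat.descFactorial_eq_factorial_mul_choose, Finset.prod_const, Finset.prod_const,
    Finset.card_range] at h1
  have h2 := Nat.factorial_pos k
  nlinarith

/-- Bound `C(N,k) ≤ N^{π(k)}` when no prime above `k` divides. -/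
theorem syl_upper1 (N k : ℕ) (hk : k ≤ N) (hN : 0 < N)
    (h : ∀ p, p.Prime → k < p → (N.choose k).factorization p = 0) :
    N.choose k ≤ N ^ Nat.primeCounting k := by
  have hprod := Nat.prod_pow_factorization_choose N k hk
  rw [← Nat.primesLE_card_eq_primeCounting, ← hprod, ← Finset.prod_const]
  have hsub : Nat.primesLE k ⊆ Finset.range (N + 1) := by
    intro p hp
    have := Nat.le_of_mem_primesLE hp
    rw [Finset.mem_range]; omega
  rw [← Finset.prod_subset hsub]
  · exact Finset.prod_le_prod' fun p _ => Nat.pow_factorization_choose_le hN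
  · intro p _ hp
    rw [Nat.mem_primesLE] at hp
    by_cases hpp : p.Prime
    · rw [h p hpp (by by_contra hc; exact hp ⟨by omega, hpp⟩), pow_zero]
    · rw [Nat.factorization_eq_zero_of_not_prime _ hpp, pow_zero]

/-- Bound `C(N,k) ≤ N^{π(√N)} 4^M` when no prime above `M` divides. -/
theorem syl_upper2 (N k M : ℕ) (hk : k ≤ N) (hN : 0 < N)
    (h : ∀ p, p.Prime → M < p → (N.choose k).factorization p = 0) :
    N.choose k ≤ N ^ Nat.primeCounting (Nat.sqrt N) * 4 ^ M := by
  have hprod := Nat.prod_pow_factorization_choose N k hk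
  have key : N.choose k ≤ N ^ Nat.primeCounting (Nat.sqrt N) * primorial M := by
    rw [← Nat.primesLE_card_eq_primeCounting, ← hprod, ← Finset.prod_const,
      primorial_eq_prod_primesLE]
    set S := Nat.primesLE (Nat.sqrt N)
    set T := Nat.primesLE M
    have e : ∏ p ∈ Finset.range (N + 1), p ^ (N.choose k).factorization p
        ≤ ∏ p ∈ Finset.range (N + 1) ∩ (S ∪ T), p ^ (N.choose k).factorization p := by
      apply le_of_eq
      symm
      apply Finset.prod_subset Finset.inter_subset_left
      intro p hp1 hp
      by_cases hpp : p.Prime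
      · by_cases hM : M < p
        · rw [h p hpp hM, pow_zero]
        · exfalso
          apply hp
          rw [Finset.mem_inter, Finset.mem_union]
          exact ⟨hp1, Or.inr (Nat.mem_primesLE.2 ⟨by omega, hpp⟩)⟩
      · rw [Nat.factorization_eq_zero_of_not_prime _ hpp, pow_zero]
    refine e.trans ?_
    have pos : ∀ p ∈ S ∪ T, 0 < p := by
      intro p hp
      rcases Finset.mem_union.1 hp with hp | hp
      · exact (Nat.prime_of_mem_primesLE hp).pos
      · exact (Nat.prime_of_mem_primesLE hp).pos
    have e2 : ∏ p ∈ Finset.range (N + 1) ∩ (S ∪ T), p ^ (N.choose k).factorization p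
        ≤ ∏ p ∈ S ∪ T, p ^ (N.choose k).factorization p := by
      apply Finset.prod_le_prod_of_subset_of_one_le' Finset.inter_subset_right
      intro p hp _
      exact Nat.one_le_pow _ _ (pos p hp)
    refine e2.trans ?_
    rw [← Finset.union_sdiff_self_eq_union, Finset.prod_union Finset.disjoint_sdiff]
    apply Nat.mul_le_mul
    · exact Finset.prod_le_prod' fun p _ => Nat.pow_factorization_choose_le hN
    · have e3 : ∏ p ∈ T \ S, p ^ (N.choose k).factorization p ≤ ∏ p ∈ T \ S, p := by
        apply Finset.prod_le_prod'
        intro p hp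
        rw [Finset.mem_sdiff] at hp
        have hpp := Nat.prime_of_mem_primesLE hp.1
        have hlt : Nat.sqrt N < p := by
          by_contra hc
          exact hp.2 (Nat.mem_primesLE.2 ⟨by omega, hpp⟩)
        have h1 : (N.choose k).factorization p ≤ 1 :=
          Nat.factorization_choose_le_one (by rw [pow_two]; exact Nat.sqrt_lt.1 hlt)
        calc p ^ (N.choose k).factorization p ≤ p ^ 1 := Nat.pow_le_pow_right hpp.pos h1
          _ = p := pow_one p
      refine e3.trans ?_
      apply Finset.prod_le_prod_of_subset_of_one_le' Finset.sdiff_subset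
      intro p hp _
      exact (Nat.prime_of_mem_primesLE hp).pos
  exact key.trans (Nat.mul_le_mul_left _ (primorial_le_four_pow M))

/-- Growth of binomial coefficients from `2k` to `3k`. -/
theorem syl_growth1 (k d : ℕ) (hd : d ≤ k) :
    3 ^ d * (2 * k).choose k ≤ 2 ^ d * (2 * k + d).choose k := by
  induction d with
  | zero => simp
  | succ d ih =>
    have ih := ih (by omega)
    have h := Nat.choose_mul_succ_eq (2 * k + d) k
    have e : 2 * k + d + 1 - k = k + d + 1 := by omega
    rw [e] at h
    have h2 : 3 * (2 * k + d).choose k ≤ 2 * (2 * k + d + 1).choose k := by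
      have : (k + d + 1) * (3 * (2 * k + d).choose k)
          ≤ (k + d + 1) * (2 * (2 * k + d + 1).choose k) := by
        nlinarith [Nat.zero_le ((2 * k + d).choose k),
          Nat.mul_le_mul_right ((2 * k + d).choose k) hd]
      exact Nat.le_of_mul_le_mul_left this (by omega)
    calc 3 ^ (d + 1) * (2 * k).choose k = 3 * (3 ^ d * (2 * k).choose k) := by ring
      _ ≤ 3 * (2 ^ d * (2 * k + d).choose k) := Nat.mul_le_mul_left _ ih
      _ = 2 ^ d * (3 * (2 * k + d).choose k) := by ring
      _ ≤ 2 ^ d * (2 * (2 * k + d + 1).choose k) := Nat.mul_le_mul_left _ h2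
      _ = 2 ^ (d + 1) * (2 * k + (d + 1)).choose k := by rw [← add_assoc]; ring

/-- Growth of binomial coefficients from `3k` to `4k`. -/
theorem syl_growth2 (k d : ℕ) (hd : d ≤ k) :
    4 ^ d * (3 * k).choose k ≤ 3 ^ d * (3 * k + d).choose k := by
  induction d with
  | zero => simp
  | succ d ih =>
    have ih := ih (by omega)
    have h := Nat.choose_mul_succ_eq (3 * k + d) k
    have e : 3 * k + d + 1 - k = 2 * k + d + 1 := by omega
    rw [e] at h
    have h2 : 4 * (3 * k + d).choose k ≤ 3 * (3 * k + d + 1).choose k := by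
      have : (2 * k + d + 1) * (4 * (3 * k + d).choose k)
          ≤ (2 * k + d + 1) * (3 * (3 * k + d + 1).choose k) := by
        nlinarith [Nat.zero_le ((3 * k + d).choose k),
          Nat.mul_le_mul_right ((3 * k + d).choose k) hd]
      exact Nat.le_of_mul_le_mul_left this (by omega)
    calc 4 ^ (d + 1) * (3 * k).choose k = 4 * (4 ^ d * (3 * k).choose k) := by ring
      _ ≤ 4 * (3 ^ d * (3 * k + d).choose k) := Nat.mul_le_mul_left _ ih
      _ = 3 ^ d * (4 * (3 * k + d).choose k) := by ring
      _ ≤ 3 ^ d * (3 * (3 * k + d + 1).choose k) := Nat.mul_le_mul_left _ h2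
      _ = 3 ^ (d + 1) * (3 * k + (d + 1)).choose k := by rw [← add_assoc]; ring

/-- `π(k) ≤ k/3` for `k ≥ 37`. -/
theorem syl_pi_small : ∀ k < 150, 37 ≤ k → 3 * Nat.primeCounting k ≤ k := by
  decide +kernel

theorem syl_pi (k : ℕ) (hk : 37 ≤ k) : 3 * Nat.primeCounting k ≤ k := by
  by_cases h : k < 150
  · exact syl_pi_small k h hk
  · have h1 := Nat.primeCounting_add_le (a := 30) (k := 30) (by norm_num) le_rfl (k - 30)
    have h2 : Nat.totient 30 = 8 := by decide +kernel
    have h3 : Nat.primeCounting 30 = 10 := by decide +kernel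
    rw [h2, h3, show 30 + (k - 30) = k by omega] at h1
    omega

/-- Small windows by direct verification. -/
def sylPrimes : List ℕ :=
  [2, 3, 5, 7, 11, 13, 17, 19, 23, 29, 31, 37, 41, 43, 47, 53, 59, 61, 67, 71, 73, 79, 83, 89, 97, 101, 103, 107, 109, 113, 127, 131, 137, 139, 149, 151, 157, 163, 167, 173, 179, 181, 191, 193, 197, 199, 211, 223, 227, 229, 233, 239, 241, 251, 257, 263, 269, 271, 277, 281, 283, 293]

theorem sylPrimes_prime : ∀ p ∈ sylPrimes, p.Prime := by
  decide +kernel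

theorem syl_small_pi : ∀ k < 37, 1 ≤ k →
    Nat.primeCounting k ≤ k ∧ k ^ k < 256 ^ (k - Nat.primeCounting k) := by
  decide +kernel

theorem syl_small_check : ∀ k < 37, 1 ≤ k → ∀ m < 256, k ≤ m →
    (m + k) ^ (k - Nat.primeCounting k) ≤ k ^ k →
    sylPrimes.any (fun p => decide (k < p) && decide (m / p < (m + k) / p)) = true := by
  decide +kernel

/-- A chain of primes starting at `37`. -/
def sylChain : List ℕ :=
  [73, 109, 139, 173, 199, 233, 271, 317, 367, 421, 479, 541, 607, 677, 757, 839, 929, 1021,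
   1123, 1231, 1327, 1447, 1571, 1709, 1847, 1999, 2153, 2311, 2477, 2659, 2851, 3049, 3259,
   3469, 3697, 3931, 4177, 4423, 4691, 4973, 5261, 5563, 5879, 6203, 6529, 6871, 7229, 7603,
   7963, 8363, 8761, 9187, 9623, 10069, 10531, 11003, 11497, 12007, 12527, 13063, 13619, 14177,
   14759, 15361, 15973, 16607, 17257, 17923, 18593, 19289, 19997, 20731, 21487, 22259, 23041,
   23833, 24659, 25471, 26321, 27197, 28099, 29023, 29959, 30911, 31891, 32887, 33911, 34949,
   36017, 37097, 38201, 39323, 40471, 41651, 42853, 44071, 45319, 46591, 47881, 49201, 50543,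
   51907, 53299, 54713, 56149, 57601, 59093, 60611, 62143, 63709, 65293, 66889, 68531, 70207,
   71909, 73637, 75391, 77171, 78979, 80819, 82657, 84551, 86477, 88427, 90407, 92419, 94463,
   96527, 98627, 100747, 102913, 105107, 107323, 109579, 111869, 114167, 116507, 118891,
   121309, 123757, 126241, 128749, 131297, 133877, 136483, 139133, 141811, 144511, 147263,
   150053, 152857, 155717, 158611, 161531, 164477, 167471, 170509, 173573, 176677, 179827,
   182999, 186211, 189473, 192767, 196087, 199457, 202859, 206303, 209789, 213319, 216877,
   220471, 224113, 227797, 231503, 235273, 239081, 242927, 246817, 250753, 254729, 258743,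
   262783]

def sylChainOK : ℕ → List ℕ → Bool
  | q, [] => decide (262144 ≤ q)
  | q, r :: l => (decide (r ≤ q + 37) || decide ((r - q - 1) ^ 3 < (q + 37) ^ 2)) && sylChainOK r l

set_option maxRecDepth 20000 in
theorem sylChain_prime : ∀ p ∈ sylChain, p.Prime := by
  unfold sylChain
  simp only [List.forall_mem_cons, List.not_mem_nil, false_imp_iff, implies_true, and_true]
  norm_num

theorem sylChain_ok : sylChainOK 37 sylChain = true := by
  decide +kernel

theorem syl_chain (l : List ℕ) (q m k : ℕ) (hok : sylChainOK q l = true)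
    (hl : ∀ p ∈ l, p.Prime) (hq : q ≤ m) (hk : 37 ≤ k) (h1 : (m + k) ^ 2 ≤ k ^ 3)
    (h2 : m + k < 262144) : ∃ p, p.Prime ∧ m < p ∧ p ≤ m + k := by
  induction l generalizing q with
  | nil =>
    simp only [sylChainOK, decide_eq_true_eq] at hok
    omega
  | cons r l ih =>
    simp only [sylChainOK, Bool.and_eq_true, Bool.or_eq_true, decide_eq_true_eq] at hok
    by_cases hr : r ≤ m
    · exact ih r hok.2 (fun p hp => hl p (List.mem_cons_of_mem _ hp)) hr
    · refine ⟨r, hl r List.mem_cons_self, by omega, ?_⟩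
      by_contra hc
      rcases hok.1 with h | h
      · omega
      · have a1 : k ^ 3 ≤ (r - q - 1) ^ 3 := Nat.pow_le_pow_left (by omega) 3
        have a2 : (q + 37) ^ 2 ≤ (m + k) ^ 2 := Nat.pow_le_pow_left (by omega) 2
        omega

/-- The basic consequence: `N^2 ≤ k^3`. -/
theorem syl_sq_le (N k : ℕ) (hk : 37 ≤ k) (hN : k ≤ N)
    (h : ∀ p, p.Prime → k < p → (N.choose k).factorization p = 0) : N ^ 2 ≤ k ^ 3 := by
  have h1 := syl_upper1 N k hN (by omega) h
  have h2 := syl_pow_le N k hN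
  have h3 : N ^ k ≤ k ^ k * N ^ Nat.primeCounting k := h2.trans (Nat.mul_le_mul_left _ h1)
  have h4 : (N ^ k) ^ 3 ≤ (k ^ k) ^ 3 * N ^ k := by
    calc (N ^ k) ^ 3 ≤ (k ^ k * N ^ Nat.primeCounting k) ^ 3 := Nat.pow_le_pow_left h3 3
      _ = (k ^ k) ^ 3 * N ^ (3 * Nat.primeCounting k) := by
        rw [mul_pow, ← pow_mul N, mul_comm (Nat.primeCounting k)]
      _ ≤ _ := Nat.mul_le_mul_left _ (Nat.pow_le_pow_right (by omega) (syl_pi k hk))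
  have h5 : (N ^ 2) ^ k ≤ (k ^ 3) ^ k := by
    have pos : 0 < N ^ k := Nat.pow_pos (by omega)
    have : (N ^ k) ^ 2 ≤ (k ^ k) ^ 3 := by
      apply Nat.le_of_mul_le_mul_right _ pos
      calc (N ^ k) ^ 2 * N ^ k = (N ^ k) ^ 3 := by ring
        _ ≤ _ := h4
    calc (N ^ 2) ^ k = (N ^ k) ^ 2 := by rw [← pow_mul, ← pow_mul, mul_comm]
      _ ≤ (k ^ k) ^ 3 := this
      _ = (k ^ 3) ^ k := by rw [← pow_mul, ← pow_mul, mul_comm]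
  exact (Nat.pow_le_pow_iff_left (by omega)).1 h5

/-- Logarithm bound. -/
theorem syl_log_u (u : ℝ) (hu : 8 ≤ u) : Real.log u ≤ 3 * Real.log 2 - 1 + u / 8 := by
  have h := Real.log_le_sub_one_of_pos (show 0 < u / 8 by positivity)
  rw [Real.log_div (by positivity) (by norm_num), show (8 : ℝ) = 2 ^ 3 by norm_num,
    Real.log_pow] at h
  push_cast at h
  norm_num at h ⊢
  linarith

theorem syl_log_three : 19 * Real.log 2 ≤ 12 * Real.log 3 ∧ 3 * Real.log 3 ≤ 5 * Real.log 2 := by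
  constructor
  · have := Real.log_le_log (by norm_num) (show (2 : ℝ) ^ 19 ≤ 3 ^ 12 by norm_num)
    rw [Real.log_pow, Real.log_pow] at this
    exact_mod_cast this
  · have := Real.log_le_log (by norm_num) (show (3 : ℝ) ^ 3 ≤ 2 ^ 5 by norm_num)
    rw [Real.log_pow, Real.log_pow] at this
    exact_mod_cast this

/-- Upper bound in logarithmic form. -/
theorem syl_log_upper (N k M : ℕ) (hk : k ≤ N) (hN : 2048 ≤ N)
    (h : ∀ p, p.Prime → M < p → (N.choose k).factorization p = 0) :
    Real.log (N.choose k) ≤ Real.sqrt N / 3 * Real.log N + M * (2 * Real.log 2) := by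
  have h1 := syl_upper2 N k M hk (by omega) h
  have hs : 37 ≤ Nat.sqrt N := Nat.le_sqrt.2 (by omega)
  have hpi := syl_pi _ hs
  have hpi' : (Nat.primeCounting (Nat.sqrt N) : ℝ) ≤ Real.sqrt N / 3 := by
    have a : ((3 * Nat.primeCounting (Nat.sqrt N) : ℕ) : ℝ) ≤ (Nat.sqrt N : ℝ) := by
      exact_mod_cast hpi
    have b : (Nat.sqrt N : ℝ) ≤ Real.sqrt N := Real.nat_sqrt_le_real_sqrt
    push_cast at a
    linarith
  have hN' : (1 : ℝ) ≤ N := by exact_mod_cast (by omega : 1 ≤ N)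
  have hc : (0 : ℝ) < N.choose k := by exact_mod_cast Nat.choose_pos hk
  have h2 : (N.choose k : ℝ) ≤ (N : ℝ) ^ Nat.primeCounting (Nat.sqrt N) * 4 ^ M := by
    exact_mod_cast h1
  have h3 := Real.log_le_log hc h2
  rw [Real.log_mul (by positivity) (by positivity), Real.log_pow, Real.log_pow,
    show (4 : ℝ) = 2 ^ 2 by norm_num, Real.log_pow] at h3
  push_cast at h3
  have h4 := mul_le_mul_of_nonneg_right hpi' (Real.log_nonneg hN')
  linarith

/-- Large case, `N < 4k`: the analytic inequality. -/
theorem syl_ineq_mid (N k : ℕ) (hk : 4096 ≤ k) (hN0 : 0 < N) (hN : N ≤ 4 * k) :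
    Real.sqrt N / 3 * Real.log N + Real.log (2 * k) < k * (7 / 12 * Real.log 2) := by
  obtain ⟨u, hu0, hu4⟩ : ∃ u : ℝ, 0 ≤ u ∧ u ^ 4 = k :=
    ⟨(k : ℝ) ^ ((1 : ℝ) / 4), by positivity, by
      rw [← Real.rpow_natCast, ← Real.rpow_mul (by positivity)]; norm_num⟩
  have hk' : (4096 : ℝ) ≤ k := by exact_mod_cast hk
  have hu : 8 ≤ u := by
    by_contra hc
    push Not at hc
    have : u ^ 4 < 8 ^ 4 := pow_lt_pow_left₀ hc hu0 (by norm_num)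
    norm_num at this
    linarith
  have hNr : (N : ℝ) ≤ 4 * u ^ 4 := by rw [hu4]; exact_mod_cast hN
  have hN0' : (0 : ℝ) < N := by exact_mod_cast hN0
  have hs : Real.sqrt N ≤ 2 * u ^ 2 := by
    apply Real.sqrt_le_iff.2 ⟨by positivity, by nlinarith⟩
  have hl : Real.log N ≤ 2 * Real.log 2 + 4 * Real.log u := by
    have := Real.log_le_log hN0' hNr
    rw [Real.log_mul (by norm_num) (by positivity), Real.log_pow,
      show (4 : ℝ) = 2 ^ 2 by norm_num, Real.log_pow] at this
    push_cast at this
    linarith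
  have hlu := syl_log_u u hu
  have hlu0 : 0 ≤ Real.log u := Real.log_nonneg (by linarith)
  have l1 := Real.log_two_gt_d9
  have l2 := Real.log_two_lt_d9
  have h2k : Real.log (2 * k) = Real.log 2 + 4 * Real.log u := by
    rw [Real.log_mul (by norm_num) (by linarith), ← hu4, Real.log_pow]
    push_cast; ring
  rw [h2k, ← hu4]
  have b1 : Real.sqrt N / 3 * Real.log N ≤ (2 * u ^ 2) / 3 * (2 * Real.log 2 + 4 * Real.log u) := by
    apply (mul_le_mul_of_nonneg_left hl (by positivity)).trans
    apply mul_le_mul_of_nonneg_right _ (by linarith)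
    linarith
  have b2 : Real.log u ≤ 1.1 + u / 8 := by linarith
  have b3 : (2 * u ^ 2) / 3 * (2 * Real.log 2 + 4 * Real.log u)
      ≤ (2 * u ^ 2) / 3 * (1.4 + 4 * (1.1 + u / 8)) := by
    apply mul_le_mul_of_nonneg_left _ (by positivity)
    linarith
  have b4 : u ^ 4 * (7 / 12 * 0.69) ≤ u ^ 4 * (7 / 12 * Real.log 2) := by
    apply mul_le_mul_of_nonneg_left _ (by positivity)
    linarith
  have c2 : 8 * u ≤ u ^ 2 := by nlinarith
  have c3 : 8 * u ^ 2 ≤ u ^ 3 := by nlinarith [sq_nonneg u]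
  have c4 : 8 * u ^ 3 ≤ u ^ 4 := by nlinarith [pow_nonneg hu0 3]
  nlinarith

/-- Large case, `N ≥ 4k`: the analytic inequality. -/
theorem syl_ineq_big (N k : ℕ) (hk : 4096 ≤ k) (hN0 : 0 < N) (hN : N ^ 2 ≤ k ^ 3) :
    Real.sqrt N / 3 * Real.log N + Real.log (2 * k) < k * Real.log 2 := by
  obtain ⟨u, hu0, hu4⟩ : ∃ u : ℝ, 0 ≤ u ∧ u ^ 4 = k :=
    ⟨(k : ℝ) ^ ((1 : ℝ) / 4), by positivity, by
      rw [← Real.rpow_natCast, ← Real.rpow_mul (by positivity)]; norm_num⟩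
  have hk' : (4096 : ℝ) ≤ k := by exact_mod_cast hk
  have hu : 8 ≤ u := by
    by_contra hc
    push Not at hc
    have : u ^ 4 < 8 ^ 4 := pow_lt_pow_left₀ hc hu0 (by norm_num)
    norm_num at this
    linarith
  have hNr2 : (N : ℝ) ^ 2 ≤ (u ^ 6) ^ 2 := by
    have : (N : ℝ) ^ 2 ≤ (k : ℝ) ^ 3 := by exact_mod_cast hN
    rw [← hu4] at this
    calc (N : ℝ) ^ 2 ≤ (u ^ 4) ^ 3 := this
      _ = (u ^ 6) ^ 2 := by ring
  have hNr : (N : ℝ) ≤ u ^ 6 := le_of_sq_le_sq hNr2 (by positivity)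
  have hN0' : (0 : ℝ) < N := by exact_mod_cast hN0
  have hs : Real.sqrt N ≤ u ^ 3 := by
    apply Real.sqrt_le_iff.2 ⟨by positivity, by rw [← pow_mul]; exact hNr⟩
  have hl : Real.log N ≤ 6 * Real.log u := by
    have := Real.log_le_log hN0' hNr
    rw [Real.log_pow] at this
    exact_mod_cast this
  have hlu := syl_log_u u hu
  have hlu0 : 0 ≤ Real.log u := Real.log_nonneg (by linarith)
  have l1 := Real.log_two_gt_d9
  have l2 := Real.log_two_lt_d9
  have h2k : Real.log (2 * k) = Real.log 2 + 4 * Real.log u := by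
    rw [Real.log_mul (by norm_num) (by linarith), ← hu4, Real.log_pow]
    push_cast; ring
  rw [h2k, ← hu4]
  have b1 : Real.sqrt N / 3 * Real.log N ≤ u ^ 3 / 3 * (6 * Real.log u) := by
    apply (mul_le_mul_of_nonneg_left hl (by positivity)).trans
    apply mul_le_mul_of_nonneg_right _ (by linarith)
    linarith
  have b2 : Real.log u ≤ 1.1 + u / 8 := by linarith
  have b3 : u ^ 3 / 3 * (6 * Real.log u) ≤ u ^ 3 / 3 * (6 * (1.1 + u / 8)) := by
    apply mul_le_mul_of_nonneg_left _ (by positivity)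
    linarith
  have b4 : u ^ 4 * 0.69 ≤ u ^ 4 * Real.log 2 := by
    apply mul_le_mul_of_nonneg_left _ (by positivity)
    linarith
  have c2 : 8 * u ≤ u ^ 2 := by nlinarith
  have c3 : 8 * u ^ 2 ≤ u ^ 3 := by nlinarith [sq_nonneg u]
  have c4 : 8 * u ^ 3 ≤ u ^ 4 := by nlinarith [pow_nonneg hu0 3]
  nlinarith

/-- Lower bound in logarithmic form on `[2k, 3k]`. -/
theorem syl_log_lower1 (k d : ℕ) (hk : 1 ≤ k) (hd : d ≤ k) :
    k * (2 * Real.log 2) + d * (Real.log 3 - Real.log 2)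
      ≤ Real.log (2 * k) + Real.log ((2 * k + d).choose k) := by
  have h1 := Nat.four_pow_le_two_mul_self_mul_centralBinom k (by omega)
  rw [Nat.centralBinom_eq_two_mul_choose] at h1
  have h2 := syl_growth1 k d hd
  have h3 : 4 ^ k * 3 ^ d ≤ 2 ^ d * ((2 * k) * (2 * k + d).choose k) := by
    calc 4 ^ k * 3 ^ d ≤ (2 * k * (2 * k).choose k) * 3 ^ d := Nat.mul_le_mul_right _ h1
      _ = (2 * k) * (3 ^ d * (2 * k).choose k) := by ring
      _ ≤ (2 * k) * (2 ^ d * (2 * k + d).choose k) := Nat.mul_le_mul_left _ h2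
      _ = _ := by ring
  have h4 : (4 : ℝ) ^ k * 3 ^ d ≤ 2 ^ d * ((2 * k) * ((2 * k + d).choose k : ℕ)) := by
    exact_mod_cast h3
  have hc : (0 : ℝ) < ((2 * k + d).choose k : ℕ) := by
    exact_mod_cast Nat.choose_pos (by omega)
  have hk' : (0 : ℝ) < k := by exact_mod_cast hk
  have h5 := Real.log_le_log (by positivity) h4
  rw [Real.log_mul (by positivity) (by positivity), Real.log_mul (by positivity) (by positivity),
    Real.log_mul (by positivity) (by positivity), Real.log_pow, Real.log_pow, Real.log_pow,
    show (4 : ℝ) = 2 ^ 2 by norm_num, Real.log_pow] at h5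
  push_cast at h5
  linarith

/-- Lower bound in logarithmic form at `4k`. -/
theorem syl_log_lower2 (k : ℕ) (hk : 1 ≤ k) :
    k * (3 * Real.log 2) ≤ Real.log (2 * k) + Real.log ((4 * k).choose k) := by
  have h1 := syl_log_lower1 k k hk le_rfl
  have h2 := syl_growth2 k k le_rfl
  rw [show 3 * k + k = 4 * k by ring] at h2
  rw [show 2 * k + k = 3 * k by ring] at h1
  have h4 : (4 : ℝ) ^ k * ((3 * k).choose k : ℕ) ≤ 3 ^ k * ((4 * k).choose k : ℕ) := by
    exact_mod_cast h2
  have hc : (0 : ℝ) < ((3 * k).choose k : ℕ) := by exact_mod_cast Nat.choose_pos (by omega)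
  have hc' : (0 : ℝ) < ((4 * k).choose k : ℕ) := by exact_mod_cast Nat.choose_pos (by omega)
  have h5 := Real.log_le_log (by positivity) h4
  rw [Real.log_mul (by positivity) (by positivity), Real.log_mul (by positivity) (by positivity),
    Real.log_pow, Real.log_pow, show (4 : ℝ) = 2 ^ 2 by norm_num, Real.log_pow] at h5
  push_cast at h5
  linarith

/-- The case of large `k`. -/
theorem syl_large (N k : ℕ) (hk : 4096 ≤ k) (hN : 2 * k ≤ N)
    (h : ∀ p, p.Prime → k < p → (N.choose k).factorization p = 0) : False := by
  have hsq := syl_sq_le N k (by omega) (by omega) h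
  have mono : ∀ a, a ≤ N → k ≤ a → Real.log (a.choose k) ≤ Real.log (N.choose k) := by
    intro a ha hka
    apply Real.log_le_log
    · exact_mod_cast Nat.choose_pos hka
    · exact_mod_cast Nat.choose_le_choose k ha
  have l3 := syl_log_three
  have hk' : (4096 : ℝ) ≤ k := by exact_mod_cast hk
  have l1 := Real.log_two_gt_d9
  by_cases h4 : 4 * k ≤ N
  · have a1 := syl_log_upper N k k (by omega) (by omega) h
    have a2 := syl_log_lower2 k (by omega)
    have a3 := mono (4 * k) h4 (by omega)
    have a4 := syl_ineq_big N k hk (by omega) hsq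
    linarith
  · have a4 := syl_ineq_mid N k hk (by omega) (by omega)
    by_cases h3 : 3 * k ≤ N
    · have a1 := syl_log_upper N k k (by omega) (by omega) h
      have a2 := syl_log_lower1 k k (by omega) le_rfl
      rw [show 2 * k + k = 3 * k by ring] at a2
      have a3 := mono (3 * k) h3 (by omega)
      have a5 : (k : ℝ) * (7 / 12 * Real.log 2) ≤ k * (Real.log 3 - Real.log 2) := by
        apply mul_le_mul_of_nonneg_left _ (by positivity)
        linarith [l3.1]
      linarith
    · obtain ⟨d, rfl⟩ := Nat.exists_eq_add_of_le hN
      have hd : d ≤ k := by omega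
      have a1 := syl_log_upper (2 * k + d) k ((2 * k + d) / 3) (by omega) (by omega) (by
        intro p hp hM
        by_cases hpk : k < p
        · exact h p hp hpk
        · exact Nat.factorization_choose_of_lt_three_mul (by omega) (by omega) (by omega)
            (by omega))
      have a2 := syl_log_lower1 k d (by omega) hd
      have a6 : (((2 * k + d) / 3 : ℕ) : ℝ) ≤ (2 * k + d) / 3 := by
        have := @Nat.cast_div_le ℝ _ _ _ (2 * k + d) 3
        push_cast at this
        exact this
      have a7 := mul_le_mul_of_nonneg_right a6 (show 0 ≤ 2 * Real.log 2 by linarith)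
      have hd' : (d : ℝ) ≤ k := by exact_mod_cast hd
      have a5 : (k : ℝ) * (7 / 12 * Real.log 2) ≤ k * (Real.log 3 - Real.log 2) := by
        apply mul_le_mul_of_nonneg_left _ (by positivity)
        linarith [l3.1]
      have a8 : 0 ≤ ((k : ℝ) - d) * (5 * Real.log 2 - 3 * Real.log 3) :=
        mul_nonneg (by linarith) (by linarith [l3.2])
      linarith

/-- Sylvester's theorem: for `m ≥ n ≥ 1`, the product of the `n` consecutive
integers `m+1, …, m+n` is divisible by a prime strictly greater than `n`. -/
theorem stmt_11 (m n : ℕ) (hmn : m ≥ n) (hn : n ≥ 1) :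
    ∃ p : ℕ, p.Prime ∧ n < p ∧ p ∣ P m n := by
  by_contra hcon
  have h : ∀ p, p.Prime → n < p → ((m + n).choose n).factorization p = 0 := by
    intro p hp hnp
    apply Nat.factorization_eq_zero_of_not_dvd
    intro hd
    apply hcon
    refine ⟨p, hp, hnp, ?_⟩
    rw [syl_P_eq]
    exact Dvd.dvd.mul_left hd _
  by_cases h37 : n < 37
  · have h1 := syl_upper1 (m + n) n (by omega) (by omega) h
    have h2 := syl_pow_le (m + n) n (by omega)
    obtain ⟨hpi, hlt⟩ := syl_small_pi n h37 hn
    have h3 : (m + n) ^ (n - Nat.primeCounting n) ≤ n ^ n := by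
      have pos : 0 < (m + n) ^ Nat.primeCounting n := Nat.pow_pos (by omega)
      apply Nat.le_of_mul_le_mul_right _ pos
      rw [← pow_add, Nat.sub_add_cancel hpi]
      exact h2.trans (Nat.mul_le_mul_left _ h1)
    have hm : m < 256 := by
      by_contra hc
      have := Nat.pow_le_pow_left (show 256 ≤ m + n by omega) (n - Nat.primeCounting n)
      omega
    have hany := syl_small_check n h37 hn m hm hmn h3
    simp only [List.any_eq_true, Bool.and_eq_true, decide_eq_true_eq] at hany
    obtain ⟨p, hp, hnp, hdiv⟩ := hany
    have hpp := sylPrimes_prime p hp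
    exact hcon ⟨p, hpp, hnp, syl_dvd_of_div_lt hpp.pos hdiv⟩
  · by_cases hT : n < 4096
    · have hsq := syl_sq_le (m + n) n (by omega) (by omega) h
      have hlt : m + n < 262144 := by
        have a : n ^ 3 < 4096 ^ 3 := Nat.pow_lt_pow_left hT (by norm_num)
        by_contra hc
        have b : 262144 ^ 2 ≤ (m + n) ^ 2 := Nat.pow_le_pow_left (by omega) 2
        norm_num at a b
        omega
      obtain ⟨p, hp, h1, h2⟩ := syl_chain sylChain 37 m n sylChain_ok sylChain_prime
        (by omega) (by omega) hsq hlt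
      apply hcon
      refine ⟨p, hp, by omega, ?_⟩
      apply syl_dvd_of_div_lt hp.pos
      rw [Nat.div_eq_of_lt h1]
      exact Nat.div_pos h2 hp.pos
    · exact syl_large (m + n) n (by omega) (by omega) h
end

section
/- Let C = 1.25506, let log denote the natural logarithm, and let π(n) denote the number of primes ≤ n. For every integer n ≥ 1123, the number of primes p with n < p < 2n is at least ⌊(1/C)·(log 4 − C − (log 2 · log 4)/log(2n))·π(n)⌋. -/
open Nat in
theorem centralBinom_le_aux (n : ℕ) (n_large : 2 < n) :
    centralBinom n ≤ (2 * n) ^ sqrt (2 * n) * 4 ^ (2 * n / 3) *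
      (2 * n) ^ ((Finset.Ioo n (2 * n)).filter Nat.Prime).card := by
  have n_pos : 0 < n := (Nat.zero_le _).trans_lt n_large
  have n2_pos : 1 ≤ 2 * n := mul_pos (zero_lt_two' ℕ) n_pos
  let S := {p ∈ Finset.range (2 * n / 3 + 1) | Nat.Prime p}
  let T := (Finset.Ioo n (2 * n)).filter Nat.Prime
  let f x := x ^ n.centralBinom.factorization x
  have hST : ∏ x ∈ S ∪ T, f x = n.centralBinom := by
    refine Eq.trans ?_ n.prod_pow_factorization_centralBinom
    apply Finset.prod_subset
    · intro x hx
      simp only [S, T, Finset.mem_union, Finset.mem_filter, Finset.mem_range, Finset.mem_Ioo] at hx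
      rw [Finset.mem_range]
      omega
    intro x hx hxST
    simp only [S, T, Finset.mem_union, Finset.mem_filter, Finset.mem_range, Finset.mem_Ioo,
      not_or] at hx hxST
    by_cases hp : x.Prime
    · have h1 : ¬ x < 2 * n / 3 + 1 := fun h => hxST.1 ⟨h, hp⟩
      have h2 : ¬ (n < x ∧ x < 2 * n) := fun h => hxST.2 ⟨h, hp⟩
      have h3 : x ≠ 2 * n := by
        rintro rfl
        exact Nat.not_prime_mul (by norm_num) (by omega) hp
      have h4 : x ≤ n := by omega
      change x ^ _ = 1
      rw [factorization_centralBinom_of_two_mul_self_lt_three_mul n_large h4 (by omega),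
        Nat.pow_zero]
    · change x ^ _ = 1
      rw [factorization_eq_zero_of_not_prime n.centralBinom hp, Nat.pow_zero]
  have hdisj : Disjoint S T := by
    rw [Finset.disjoint_left]
    intro x hx hy
    simp only [S, T, Finset.mem_filter, Finset.mem_range, Finset.mem_Ioo] at hx hy
    omega
  rw [Finset.prod_union hdisj] at hST
  rw [← hST, ← Finset.prod_filter_mul_prod_filter_not S (· ≤ sqrt (2 * n))]
  apply mul_le_mul'
  · apply mul_le_mul'
    · refine (Finset.prod_le_prod' fun p _ => (?_ : f p ≤ 2 * n)).trans ?_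
      · exact pow_factorization_choose_le (mul_pos two_pos n_pos)
      have : (Finset.Icc 1 (sqrt (2 * n))).card = sqrt (2 * n) := by
        rw [card_Icc, Nat.add_sub_cancel]
      rw [Finset.prod_const]
      refine pow_right_mono₀ n2_pos ((Finset.card_le_card fun x hx => ?_).trans this.le)
      obtain ⟨h1, h2⟩ := Finset.mem_filter.1 hx
      exact Finset.mem_Icc.mpr ⟨(Finset.mem_filter.1 h1).2.one_lt.le, h2⟩
    · refine le_trans ?_ (primorial_le_four_pow (2 * n / 3))
      refine (Finset.prod_le_prod' fun p hp => (?_ : f p ≤ p)).trans ?_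
      · obtain ⟨h1, h2⟩ := Finset.mem_filter.1 hp
        refine (pow_right_mono₀ (Finset.mem_filter.1 h1).2.one_lt.le ?_).trans (pow_one p).le
        exact Nat.factorization_choose_le_one (sqrt_lt'.mp <| not_le.1 h2)
      refine Finset.prod_le_prod_of_subset_of_one_le' (Finset.filter_subset _ _) ?_
      exact fun p hp _ => (Finset.mem_filter.1 hp).2.one_lt.le
  · refine (Finset.prod_le_prod' fun p _ => (?_ : f p ≤ 2 * n)).trans ?_
    · exact pow_factorization_choose_le (mul_pos two_pos n_pos)
    rw [Finset.prod_const]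

theorem final_ineq_aux (c l s r : ℝ) (hc1 : 0.6931471803 < c) (hc2 : c < 0.6931471808)
    (hl : 6.93 ≤ l) (hs : 33.5 ≤ s) (hls : l ≤ s * (4 / 67) + 5.026) (hr : r ≤ 1.4143) :
    (0.10457 * l - c) * (4 * c * s ^ 2 + s * l) ≤
      (2 * c / 3 * s ^ 2 - r * s * (l + c) - l) * l := by
  have h1 : s * (0.1721 * l + 1.92) ≤ s * (2 * c * l / 3 - 4 * 0.10457 * c * l + 4 * c ^ 2) := by
    have : 0.1721 * l ≤ 2 * c * l / 3 - 4 * 0.10457 * c * l := by nlinarith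
    have : 1.92 ≤ 4 * c ^ 2 := by nlinarith
    apply mul_le_mul_of_nonneg_left _ (by linarith)
    linarith
  have h2 : 16.75 * (l - 5.026) * (0.1721 * l + 1.92) ≤ s * (0.1721 * l + 1.92) := by
    gcongr
    linarith
  have h3 : 1.55 * l ^ 2 + 0.29 * l ≤ 16.75 * (l - 5.026) * (0.1721 * l + 1.92) := by
    nlinarith
  have h4 : r * (l + c) * l ≤ 1.4143 * (l + 0.69315) * l := by
    gcongr
    linarith
  have h5 : c * l ≥ 0.693147 * l := by gcongr; linarith
  have h6 : l ^ 2 ≤ s * (l ^ 2 * (2 / 67)) := by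
    have : 33.5 * (l ^ 2 * (2 / 67)) ≤ s * (l ^ 2 * (2 / 67)) := by gcongr
    linarith
  have h7 : r * (l + c) * l + l ^ 2 * (2 / 67) + 0.10457 * l ^ 2 - c * l ≤
      s * (2 * c * l / 3 - 4 * 0.10457 * c * l + 4 * c ^ 2) := by
    nlinarith
  have h8 := mul_le_mul_of_nonneg_left h7 (by linarith : 0 ≤ s)
  nlinarith

/-- For every integer `n ≥ 1123`, the number of primes in `(n, 2n)` is at least
`⌊(1/C)·(log 4 − C − log 2 · log 4 / log(2n))·π(n)⌋`, with `C = 1.25506`. -/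
theorem stmt_15 (n : ℕ) (hn : n ≥ 1123) :
    ⌊(1 / 1.25506 : ℝ) *
        (Real.log 4 - 1.25506 - Real.log 2 * Real.log 4 / Real.log (2 * (n : ℝ))) *
        (Nat.primeCounting n : ℝ)⌋ ≤
      (((Finset.Ioo n (2 * n)).filter Nat.Prime).card : ℤ) := by
  have hnat : 4 ^ n ≤ n * ((2 * n) ^ Nat.sqrt (2 * n) * 4 ^ (2 * n / 3) *
      (2 * n) ^ ((Finset.Ioo n (2 * n)).filter Nat.Prime).card) :=
    (Nat.four_pow_lt_mul_centralBinom n (by omega)).le.trans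
      (Nat.mul_le_mul_left _ (centralBinom_le_aux n (by omega)))
  set K := ((Finset.Ioo n (2 * n)).filter Nat.Prime).card with hK
  have hnR : (1123 : ℝ) ≤ n := by exact_mod_cast hn
  have hn0 : (0 : ℝ) < n := by linarith
  have hlog4 : Real.log 4 = 2 * Real.log 2 := by
    rw [show (4 : ℝ) = 2 ^ 2 by norm_num, Real.log_pow]; norm_num
  have hL : Real.log (2 * (n : ℝ)) = Real.log n + Real.log 2 := by
    rw [Real.log_mul (by norm_num) hn0.ne']; ring
  have hc1 := Real.log_two_gt_d9
  have hc2 := Real.log_two_lt_d9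
  have hl : 6.93 ≤ Real.log n := by
    have : Real.log (2 ^ 10) ≤ Real.log n := Real.log_le_log (by norm_num) (by linarith)
    rw [Real.log_pow] at this
    push_cast at this
    linarith
  have hs : 33.5 ≤ √(n : ℝ) := Real.le_sqrt_of_sq_le (by norm_num; linarith)
  have hss : √(n : ℝ) ^ 2 = n := Real.sq_sqrt hn0.le
  have hlogs : Real.log √(n : ℝ) = Real.log n / 2 := Real.log_sqrt hn0.le
  have hls : Real.log n ≤ √(n : ℝ) * (4 / 67) + 5.026 := by
    have h1 : Real.log (√(n : ℝ) / 32) = Real.log n / 2 - 5 * Real.log 2 := by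
      rw [Real.log_div (by linarith) (by norm_num), hlogs, show (32 : ℝ) = 2 ^ 5 by norm_num,
        Real.log_pow]
      norm_num
    have h2 : Real.log (√(n : ℝ) / 32) =
        Real.log (√(n : ℝ) / 33.5) + Real.log (33.5 / 32) := by
      rw [← Real.log_mul (div_pos (by linarith) (by norm_num)).ne' (by norm_num)]
      congr 1
      field_simp
    have h3 := Real.log_le_sub_one_of_pos
      (div_pos (by linarith : 0 < √(n : ℝ)) (by norm_num : (0:ℝ) < 33.5))
    have h4 := Real.log_le_sub_one_of_pos (by norm_num : (0:ℝ) < 33.5 / 32)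
    norm_num at h1 h2 h3 h4 ⊢
    linarith
  have hr : √(2 : ℝ) ≤ 1.4143 := by
    rw [Real.sqrt_le_left (by norm_num)]; norm_num
  have hfin := final_ineq_aux (Real.log 2) (Real.log n) √(n : ℝ) √2 hc1 hc2 hl hs hls hr
  -- lower bound on K
  have hKlow : 2 * Real.log 2 / 3 * n - √2 * √(n : ℝ) * (Real.log n + Real.log 2) - Real.log n ≤
      (Real.log n + Real.log 2) * K := by
    have h1 : ((4 : ℝ)) ^ n ≤ n * ((2 * n) ^ Nat.sqrt (2 * n) * 4 ^ (2 * n / 3) *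
      (2 * n) ^ K) := by exact_mod_cast hnat
    have h2 := Real.log_le_log (by positivity) h1
    rw [Real.log_mul (by positivity) (by positivity), Real.log_mul (by positivity) (by positivity),
      Real.log_mul (by positivity) (by positivity), Real.log_pow, Real.log_pow, Real.log_pow,
      Real.log_pow, hL, hlog4] at h2
    have h3 : ((2 * n / 3 : ℕ) : ℝ) ≤ 2 * n / 3 := by
      refine Nat.cast_div_le.trans ?_
      push_cast
      exact le_rfl
    have h4 : ((Nat.sqrt (2 * n) : ℕ) : ℝ) ≤ √2 * √(n : ℝ) := by
      rw [← Real.sqrt_mul (by norm_num)]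
      refine Real.nat_sqrt_le_real_sqrt.trans ?_
      push_cast
      exact le_rfl
    have h5 := mul_le_mul_of_nonneg_right h3 (by linarith : 0 ≤ 2 * Real.log 2)
    have h6 := mul_le_mul_of_nonneg_right h4 (by linarith : 0 ≤ Real.log n + Real.log 2)
    linarith
  have hP := Chebyshev.pi_le_log4_mul_div (by linarith : (1 : ℝ) < n)
  rw [Nat.floor_natCast, hlogs, hlog4] at hP
  set P : ℝ := (Nat.primeCounting n : ℝ) with hPdef
  have hP0 : 0 ≤ P := Nat.cast_nonneg _
  have hlpos : 0 < Real.log n := by linarith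
  have hPl : P * Real.log n ≤ 4 * Real.log 2 * √(n : ℝ) ^ 2 + √(n : ℝ) * Real.log n := by
    have := mul_le_mul_of_nonneg_right hP hlpos.le
    refine this.trans (le_of_eq ?_)
    rw [hss]
    field_simp
    ring
  have hmain : (0.10457 * Real.log n - Real.log 2) * P ≤ (Real.log n + Real.log 2) * K := by
    refine le_of_mul_le_mul_right ?_ hlpos
    have h1 : (0.10457 * Real.log n - Real.log 2) * (P * Real.log n) ≤ _ :=
      mul_le_mul_of_nonneg_left hPl (by linarith)
    rw [hss] at hfin h1
    have h2 := mul_le_mul_of_nonneg_right hKlow hlpos.le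
    linarith
  have hreal : (1 / 1.25506 : ℝ) *
        (Real.log 4 - 1.25506 - Real.log 2 * Real.log 4 / Real.log (2 * (n : ℝ))) * P ≤ K := by
    rw [hL, hlog4]
    have hLpos : 0 < Real.log n + Real.log 2 := by linarith
    refine le_of_mul_le_mul_left ?_ hLpos
    refine le_trans ?_ hmain
    have e : (Real.log n + Real.log 2) * ((1 / 1.25506 : ℝ) *
        (2 * Real.log 2 - 1.25506 - Real.log 2 * (2 * Real.log 2) / (Real.log n + Real.log 2)) * P)
        = (((2 * Real.log 2 - 1.25506) / 1.25506) * Real.log n - Real.log 2) * P := by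
      field_simp
      ring
    rw [e]
    have : (2 * Real.log 2 - 1.25506) / 1.25506 ≤ 0.10457 := by
      rw [div_le_iff₀ (by norm_num)]; linarith
    gcongr
  have : (⌊(1 / 1.25506 : ℝ) *
        (Real.log 4 - 1.25506 - Real.log 2 * Real.log 4 / Real.log (2 * (n : ℝ))) * P⌋ : ℝ) ≤ K :=
    (Int.floor_le _).trans hreal
  exact_mod_cast this
end
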